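/- arXiv:1512.08053 — 3 statements merged into one kernel-verified Lean document; each statement's English description precedes it below -/
import Mathlib

section
/- Let S = k[y_0,...,y_n] and R = k[y_0,...,y_n], and let φ: S → R be the k-algebra map y_i ↦ f_i where f_0,...,f_n is an R-regular sequence of homogeneous elements of the same positive degree d. If I ⊆ S is a homogeneous ideal and f ∈ S is a nonzero homogeneous element with f ∉ I, then φ(f) ∉ φ_*(I) whenever every homogeneous generator of the ideal (f) ∩ I of S has degree strictly greater than deg(f). -/
open MvPolynomial

/-- A homogeneous ideal: one generated by homogeneous elements. -/
def IsHomogIdeal {σ R : Type*} [CommSemiring R] (I : Ideal (MvPolynomial σ R)) : Prop :=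
  ∃ G : Set (MvPolynomial σ R), Ideal.span G = I ∧ ∀ g ∈ G, ∃ d, g.IsHomogeneous d


theorem aux_poly {A B M ι : Type*} [CommRing A] [CommRing B] [AddCommGroup M] [Module A M]
    (ψ : B →+* A) (r : A) (hr : IsSMulRegular M r) (s : Finset ι) (v : ι → M)
    (h : ∀ q : ι → B, (∃ x : M, ∑ b ∈ s, ψ (q b) • v b = r • x) → ∀ b ∈ s, q b = 0)
    (N : ℕ) : ∀ P : ι → Polynomial B, (∀ b ∈ s, (P b).natDegree ≤ N) →
      ∑ b ∈ s, (P b).eval₂ ψ r • v b = 0 → ∀ b ∈ s, P b = 0 := by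
  have key : ∀ P : ι → Polynomial B, ∑ b ∈ s, (P b).eval₂ ψ r • v b = 0 →
      (∀ b ∈ s, (P b).coeff 0 = 0) ∧ ∑ b ∈ s, (P b).divX.eval₂ ψ r • v b = 0 := by
    intro P hP
    have e : ∑ b ∈ s, (P b).eval₂ ψ r • v b =
        r • (∑ b ∈ s, (P b).divX.eval₂ ψ r • v b) + ∑ b ∈ s, ψ ((P b).coeff 0) • v b := by
      rw [Finset.smul_sum, ← Finset.sum_add_distrib]
      refine Finset.sum_congr rfl fun b _ => ?_
      conv_lhs => rw [← Polynomial.divX_mul_X_add (P b)]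
      rw [Polynomial.eval₂_add, Polynomial.eval₂_mul, Polynomial.eval₂_X, Polynomial.eval₂_C,
        add_smul, mul_comm, mul_smul]
    rw [e] at hP
    have h0 := h (fun b => (P b).coeff 0)
      ⟨-(∑ b ∈ s, (P b).divX.eval₂ ψ r • v b), by rw [smul_neg]; exact eq_neg_of_add_eq_zero_right hP⟩
    refine ⟨h0, ?_⟩
    have : ∑ b ∈ s, ψ ((P b).coeff 0) • v b = 0 :=
      Finset.sum_eq_zero fun b hb => by rw [h0 b hb]; simp
    rw [this, add_zero] at hP
    exact hr (by simpa using hP)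
  induction N with
  | zero =>
    intro P hd hP b hb
    rw [Polynomial.eq_C_of_natDegree_le_zero (hd b hb), (key P hP).1 b hb, map_zero]
  | succ N ih =>
    intro P hd hP b hb
    have := ih (fun b => (P b).divX) (fun b hb => by
      rw [Polynomial.natDegree_divX_eq_natDegree_tsub_one]; have := hd b hb; omega) (key P hP).2 b hb
    rw [← Polynomial.divX_mul_X_add (P b), (key P hP).1 b hb]
    simp [this]

theorem aux_indep {k A ι : Type*} [Field k] [CommRing A] [Algebra k A] (s : Finset ι) (m : ℕ) :
    ∀ (M : Type*) [AddCommGroup M] [Module A M] (f : Fin m → A) (v : ι → M),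
      RingTheory.Sequence.IsWeaklyRegular M (List.ofFn f) →
      (∀ a : ι → k, ∑ b ∈ s, algebraMap k A (a b) • v b ∈
        (Ideal.ofList (List.ofFn f) • ⊤ : Submodule A M) → ∀ b ∈ s, a b = 0) →
      ∀ c : ι → MvPolynomial (Fin m) k, ∑ b ∈ s, aeval f (c b) • v b = 0 → ∀ b ∈ s, c b = 0 := by
  induction m with
  | zero =>
    intro M _ _ f v _ h c hc b hb
    have e : ∀ b, c b = C ((c b).coeff 0) := fun b =>
      MvPolynomial.eq_C_of_isEmpty (c b)
    rw [e b, h (fun b => (c b).coeff 0) ?_ b hb, map_zero]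
    convert Submodule.zero_mem _
    rw [← hc]
    refine Finset.sum_congr rfl fun b _ => ?_
    conv_rhs => rw [e b]
    simp
  | succ m ih =>
    intro M _ _ f v hreg h c hc b hb
    rw [List.ofFn_succ, RingTheory.Sequence.isWeaklyRegular_cons_iff] at hreg
    have step := aux_poly (M := M) (aeval (R := k) (fun i => f (Fin.succ i))).toRingHom (f 0) hreg.1 s v
      ?_ (s.sup fun b => (finSuccEquiv k m (c b)).natDegree) (fun b => finSuccEquiv k m (c b))
      (fun b hb => Finset.le_sup (f := fun b => (finSuccEquiv k m (c b)).natDegree) hb) ?_ b hb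
    · simpa using step
    · rintro q ⟨x, hx⟩
      refine ih (QuotSMulTop (f 0) M) (fun i => f i.succ) (fun b => Submodule.Quotient.mk (v b)) hreg.2
        ?_ q ?_
      · intro a ha
        apply h
        have e : ∑ b ∈ s, algebraMap k A (a b) • (Submodule.Quotient.mk (v b) : QuotSMulTop (f 0) M)
          = Submodule.mkQ _ (∑ b ∈ s, algebraMap k A (a b) • v b) := by simp
        rw [e] at ha
        have t : (⊤ : Submodule A (QuotSMulTop (f 0) M)) = Submodule.map (Submodule.mkQ _) ⊤ := by simp
        rw [t, ← Submodule.map_smul'', ← Submodule.mem_comap, Submodule.comap_map_eq,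
          Submodule.ker_mkQ] at ha
        rw [List.ofFn_succ, Ideal.ofList_cons, Submodule.sup_smul, Submodule.ideal_span_singleton_smul,
          sup_comm]
        exact ha
      · have e : ∑ b ∈ s, aeval (fun i => f i.succ) (q b) • (Submodule.Quotient.mk (v b) : QuotSMulTop (f 0) M)
          = Submodule.mkQ _ (∑ b ∈ s, aeval (fun i => f i.succ) (q b) • v b) := by simp
        rw [e]
        refine (Submodule.Quotient.mk_eq_zero _).2 ?_
        erw [hx]
        exact Submodule.smul_mem_pointwise_smul _ _ _ trivial
    · rw [← hc]
      refine Finset.sum_congr rfl fun b _ => ?_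
      congr 1
      have : ((Polynomial.eval₂RingHom (aeval (R := k) (fun i => f (Fin.succ i))).toRingHom (f 0)).comp
        (finSuccEquiv k m).toRingEquiv.toRingHom) = (aeval f).toRingHom := by
        apply MvPolynomial.ringHom_ext
        · intro r; simp [finSuccEquiv_apply]
        · intro i; refine Fin.cases ?_ (fun i => ?_) i <;> simp [finSuccEquiv_apply]
      exact DFunLike.congr_fun this (c b)

theorem aux_span {k σ : Type*} [Field k] {m : ℕ} (f : Fin m → MvPolynomial σ k) (d : ℕ) (hd : 0 < d)
    (hhom : ∀ i, (f i).IsHomogeneous d) (T : Set (σ →₀ ℕ))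
    (W : Submodule k (MvPolynomial σ k)) (hT : ∀ t ∈ T, monomial t 1 ∈ W)
    (hW : ∀ j, ∀ h ∈ W, h * f j ∈ W)
    (hs : ∀ h, ∃ w ∈ Submodule.span k ((fun t => monomial t (1:k)) '' T),
      h - w ∈ Ideal.span (Set.range f)) (N : ℕ) :
    ∀ h : MvPolynomial σ k, h.IsHomogeneous N → h ∈ W := by
  induction N using Nat.strong_induction_on with
  | _ N ih =>
  intro h hh
  obtain ⟨w, hw, hwf⟩ := hs h
  obtain ⟨c, hc⟩ := Ideal.mem_span_range_iff_exists_fun.1 hwf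
  have e : h = homogeneousComponent N w + ∑ j, homogeneousComponent N (c j * f j) := by
    rw [← map_sum, hc, ← map_add, add_sub_cancel, homogeneousComponent_of_mem hh, if_pos rfl]
  rw [e]
  refine add_mem ?_ (sum_mem fun j _ => ?_)
  · clear e hwf hc
    induction hw using Submodule.span_induction with
    | mem x hx =>
      obtain ⟨t, ht, rfl⟩ := hx
      rw [homogeneousComponent_of_mem (isHomogeneous_monomial (1:k) rfl)]
      split_ifs
      · exact hT t ht
      · exact zero_mem _
    | zero => simp
    | add x y _ _ hx hy => rw [map_add]; exact add_mem hx hy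
    | smul a x _ hx => rw [map_smul]; exact W.smul_mem _ hx
  · letI : GradedAlgebra (homogeneousSubmodule σ k) := MvPolynomial.gradedAlgebra
    have hcomp : ∀ q : MvPolynomial σ k, homogeneousComponent N q =
      (DirectSum.decompose (homogeneousSubmodule σ k) q N : MvPolynomial σ k) := fun q => by
      exact (decomposition.decompose'_apply q N).symm
    rw [hcomp]
    by_cases hN : d ≤ N
    · rw [DirectSum.coe_decompose_mul_of_right_mem_of_le (homogeneousSubmodule σ k) (hhom j) hN]
      exact hW j _ (ih (N - d) (by omega) _ (SetLike.coe_mem (DirectSum.decompose (homogeneousSubmodule σ k) (c j) (N - d))))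
    · rw [DirectSum.coe_decompose_mul_of_right_mem_of_not_le (homogeneousSubmodule σ k) (hhom j) hN]
      exact zero_mem _

theorem aux_main {k σ : Type*} [Field k] {m : ℕ} (f : Fin m → MvPolynomial σ k) (d : ℕ) (hd : 0 < d)
    (hhom : ∀ i, (f i).IsHomogeneous d)
    (hreg : RingTheory.Sequence.IsRegular (MvPolynomial σ k) (List.ofFn f))
    (I : Ideal (MvPolynomial (Fin m) k)) (p : MvPolynomial (Fin m) k)
    (hp : aeval f p ∈ Ideal.map (aeval (R := k) f) I) : p ∈ I := by
  letI : Algebra (MvPolynomial (Fin m) k) (MvPolynomial σ k) := (aeval (R := k) f).toRingHom.toAlgebra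
  have hsm : ∀ (a : MvPolynomial (Fin m) k) (x : MvPolynomial σ k), a • x = aeval f a * x :=
    fun a x => rfl
  set J : Ideal (MvPolynomial σ k) := Ideal.span (Set.range f) with hJ
  let π := (Ideal.Quotient.mkₐ k J).toLinearMap
  obtain ⟨κ, a, ha, hspan, hli⟩ := exists_linearIndependent' k
    (fun t : σ →₀ ℕ => π (monomial t (1:k)))
  have hofl : Ideal.ofList (List.ofFn f) = J := by
    simp only [Ideal.ofList, hJ]; congr 1; ext x; simp [List.mem_ofFn]
  have hLI : LinearIndependent (MvPolynomial (Fin m) k) (fun i : κ => monomial (a i) (1:k)) := by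
    rw [linearIndependent_iff']
    intro s g hg
    refine aux_indep s m (MvPolynomial σ k) f _ hreg.toIsWeaklyRegular ?_ g hg
    intro q hq
    rw [linearIndependent_iff'] at hli
    refine hli s q ?_
    rw [hofl] at hq
    have hq' : ∑ b ∈ s, q b • monomial (a b) (1:k) ∈ J := by
      simpa [algebraMap_eq, smul_eq_C_mul] using hq
    have := Ideal.Quotient.eq_zero_iff_mem.2 hq'
    rw [← this]
    change _ = π _
    simp
  have hmon : Submodule.span k (Set.range fun t : σ →₀ ℕ => monomial t (1:k)) = ⊤ := by
    have := (basisMonomials σ k).span_eq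
    simpa using this
  have hSP : ⊤ ≤ Submodule.span (MvPolynomial (Fin m) k) (Set.range fun i : κ => monomial (a i) (1:k)) := by
    intro x _
    set W := Submodule.span (MvPolynomial (Fin m) k) (Set.range fun i : κ => monomial (a i) (1:k)) with hWdef
    let W' : Submodule k (MvPolynomial σ k) :=
      { W.toAddSubmonoid with
        smul_mem' := fun c y hy => by
          have := W.smul_mem (C c) hy
          rw [hsm] at this
          simpa [algebraMap_eq, smul_eq_C_mul] using this }
    have := aux_span f d hd hhom (Set.range a) W' ?_ ?_ ?_
    · change x ∈ W'
      rw [← sum_homogeneousComponent x]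
      exact sum_mem fun i _ => this i _ (homogeneousComponent_isHomogeneous i x)
    · rintro _ ⟨i, rfl⟩
      exact Submodule.subset_span ⟨i, rfl⟩
    · intro j h hh
      have := W.smul_mem (X j) hh
      rw [hsm, aeval_X, mul_comm] at this
      exact this
    · intro h
      have h1 : π h ∈ Submodule.span k (Set.range ((fun t : σ →₀ ℕ => π (monomial t (1:k))) ∘ a)) := by
        rw [hspan]
        have : (Set.range fun t : σ →₀ ℕ => π (monomial t (1:k))) =
          π '' (Set.range fun t : σ →₀ ℕ => monomial t (1:k)) := by
            rw [← Set.range_comp]; rfl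
        rw [this, Submodule.span_image, hmon]
        exact Submodule.mem_map_of_mem trivial
      have : Set.range ((fun t : σ →₀ ℕ => π (monomial t (1:k))) ∘ a) =
          π '' ((fun t : σ →₀ ℕ => monomial t (1:k)) '' Set.range a) := by
        rw [← Set.range_comp, ← Set.range_comp]; rfl
      rw [this, Submodule.span_image] at h1
      obtain ⟨w, hw, hwe⟩ := h1
      exact ⟨w, hw, (Ideal.Quotient.eq).1 hwe.symm⟩
  haveI : Module.Free (MvPolynomial (Fin m) k) (MvPolynomial σ k) :=
    Module.Free.of_basis (Module.Basis.mk hLI hSP)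
  have := Ideal.comap_map_eq_self_of_faithfullyFlat (B := MvPolynomial σ k) I
  rw [← this]
  exact hp

/-- Let `φ : S → R`, `y_i ↦ f_i`, for a regular sequence of homogeneous elements
of the same positive degree `d`. If `I ⊆ S` is a homogeneous ideal and `p ∈ S` is a nonzero
homogeneous element with `p ∉ I`, then `φ(p) ∉ φ_*(I)` whenever `(p) ∩ I` admits a homogeneous
generating set all of whose elements have degree strictly greater than `deg p`. -/
theorem stmt5 (k : Type*) [Field k] (n : ℕ) (f : Fin (n + 1) → MvPolynomial (Fin (n + 1)) k)
    (d : ℕ) (hd : 0 < d) (hhom : ∀ i, (f i).IsHomogeneous d)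
    (hreg : RingTheory.Sequence.IsRegular (MvPolynomial (Fin (n + 1)) k) (List.ofFn f))
    (I : Ideal (MvPolynomial (Fin (n + 1)) k)) (hI : IsHomogIdeal I)
    (p : MvPolynomial (Fin (n + 1)) k) (e : ℕ) (hp : p.IsHomogeneous e) (hp0 : p ≠ 0)
    (hpI : p ∉ I)
    (hgen : ∃ G : Set (MvPolynomial (Fin (n + 1)) k),
      Ideal.span G = Ideal.span {p} ⊓ I ∧ ∀ g ∈ G, ∃ e', g.IsHomogeneous e' ∧ e < e') :
    MvPolynomial.aeval f p ∉ Ideal.map (MvPolynomial.aeval (R := k) f) I := by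
  exact fun h => hpI (aux_main f d hd hhom hreg I p h)
end

section
/- Let I = (x(y^3−z^3), y(x^3−z^3), z(x^3−y^3)) ⊆ C[x,y,z] and let φ: C[x,y,z] → C[x,y,z] be the C-algebra map x ↦ x^2+y^2, y ↦ y^2+z^2, z ↦ x^2+z^2. Then the ideal φ_*(I) = (f(g^3−h^3), g(f^3−h^3), h(f^3−g^3)), with f = x^2+y^2, g = y^2+z^2, h = x^2+z^2, satisfies φ_*(I)^{(3)} ⊄ φ_*(I)^2. -/
open MvPolynomial

/-- The `m`-th symbolic power `I^(m) = ⋂_{P ∈ Ass(R/I)} (I^m R_P ∩ R)`. -/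
noncomputable def symbolicPower {R : Type*} [CommRing R] (I : Ideal R) (m : ℕ) : Ideal R :=
  ⨅ (P : Ideal R) (hP : P ∈ associatedPrimes R (R ⧸ I)),
    letI : P.IsPrime := hP.1
    Ideal.comap (algebraMap R (Localization.AtPrime P))
      (Ideal.map (algebraMap R (Localization.AtPrime P)) (I ^ m))


namespace Fermat

abbrev S := MvPolynomial (Fin 3) ℂ

/-- Multiplication by a third variable is injective modulo `(X i, X j ^ k)`. -/
lemma nzd_mono (i j l : Fin 3) (hi : i ≠ l) (hj : j ≠ l) (k : ℕ) (u : S)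
    (h : X l * u ∈ Ideal.span {(X i : S), X j ^ k}) : u ∈ Ideal.span {(X i : S), X j ^ k} := by
  have e : ({(X i : S), X j ^ k} : Set S) =
      (fun s => monomial s (1 : ℂ)) '' {Finsupp.single i 1, Finsupp.single j k} := by
    simp [Set.image_pair, X, monomial_pow]
  rw [e, mem_ideal_span_monomial_image] at h ⊢
  intro m hm
  have hm' : m + Finsupp.single l 1 ∈ (X l * u).support := by
    rw [mem_support_iff] at hm ⊢
    rw [mul_comm, coeff_mul_X]
    exact hm
  obtain ⟨s, hs, hle⟩ := h _ hm'
  refine ⟨s, hs, ?_⟩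
  rcases hs with rfl | rfl
  · rw [Finsupp.single_le_iff] at hle ⊢
    simpa [hi, hi.symm] using hle
  · rw [Finsupp.single_le_iff] at hle ⊢
    simpa [hj, hj.symm] using hle

lemma nzd_mono_pow (i j l : Fin 3) (hi : i ≠ l) (hj : j ≠ l) (k n : ℕ) (u : S)
    (h : X l ^ n * u ∈ Ideal.span {(X i : S), X j ^ k}) :
    u ∈ Ideal.span {(X i : S), X j ^ k} := by
  induction n with
  | zero => simpa using h
  | succ n ih => exact ih (nzd_mono i j l hi hj k _ (by rw [← mul_assoc, ← pow_succ']; exact h))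

lemma nzd1 (i j l : Fin 3) (hi : i ≠ l) (hj : j ≠ l) (n : ℕ) (u : S)
    (h : X l ^ n * u ∈ Ideal.span {(X i : S), X j}) :
    u ∈ Ideal.span {(X i : S), X j} := by
  have := nzd_mono_pow i j l hi hj 1 n u
  rw [pow_one] at this
  exact this h

/-- the ideal of the nine points -/
noncomputable def Q : Ideal S := Ideal.span {(X 1 : S) ^ 3 - X 2 ^ 3, (X 0 : S) ^ 3 - X 1 ^ 3}

/-- the Fermat ideal -/
noncomputable def I : Ideal S := Ideal.span {(X 0 : S) * (X 1 ^ 3 - X 2 ^ 3), X 1 * (X 0 ^ 3 - X 2 ^ 3),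
  X 2 * (X 0 ^ 3 - X 1 ^ 3)}

lemma nzdQ (u : S) (h : X 0 * u ∈ Q) : u ∈ Q := by
  unfold Q at *
  rw [Ideal.mem_span_pair] at h ⊢
  obtain ⟨s, t, h⟩ := h
  have h1 : s ∈ Ideal.span {(X 0 : S), X 1 ^ 3} := by
    apply nzd_mono_pow 0 1 2 (by decide) (by decide) 3 3
    rw [Ideal.mem_span_pair]
    exact ⟨t * X 0 ^ 2 - u, s - t, by linear_combination h⟩
  rw [Ideal.mem_span_pair] at h1
  obtain ⟨s1, k, h1⟩ := h1
  have h2 : (X 0 : S) ∣ X 1 ^ 3 * (k * (X 1 ^ 3 - X 2 ^ 3) - t) :=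
    ⟨u - s1 * (X 1 ^ 3 - X 2 ^ 3) - t * X 0 ^ 2, by
      linear_combination h + (X 1 ^ 3 - X 2 ^ 3) * h1⟩
  have hp : Prime (X 0 : S) := X_prime
  rcases hp.dvd_or_dvd h2 with h3 | h3
  · have := hp.dvd_of_dvd_pow h3
    rw [X_dvd_X] at this
    exact absurd this (by decide)
  · obtain ⟨t1, h3⟩ := h3
    refine ⟨k * X 0 ^ 2 + s1, -t1, ?_⟩
    apply mul_left_cancel₀ hp.ne_zero
    linear_combination h + (X 1 ^ 3 - X 2 ^ 3) * h1 + (X 0 ^ 3 - X 1 ^ 3) * h3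

lemma nzdQ_pow (n : ℕ) (u : S) (h : X 0 ^ n * u ∈ Q) : u ∈ Q := by
  induction n with
  | zero => simpa using h
  | succ n ih => exact ih (nzdQ _ (by rw [← mul_assoc, ← pow_succ']; exact h))

lemma I_le (K : Ideal S) (h0 : (X 0 : S) * (X 1 ^ 3 - X 2 ^ 3) ∈ K)
    (h1 : (X 1 : S) * (X 0 ^ 3 - X 2 ^ 3) ∈ K) (h2 : (X 2 : S) * (X 0 ^ 3 - X 1 ^ 3) ∈ K) :
    I ≤ K := by
  unfold I
  rw [Ideal.span_le]
  intro x hx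
  rw [Set.mem_insert_iff, Set.mem_insert_iff, Set.mem_singleton_iff] at hx
  rcases hx with hx | hx | hx
  · rw [hx]; exact h0
  · rw [hx]; exact h1
  · rw [hx]; exact h2

lemma g0 : (X 0 : S) * (X 1 ^ 3 - X 2 ^ 3) ∈ I := Ideal.subset_span (by simp)
lemma g1 : (X 1 : S) * (X 0 ^ 3 - X 2 ^ 3) ∈ I := Ideal.subset_span (by simp)
lemma g2 : (X 2 : S) * (X 0 ^ 3 - X 1 ^ 3) ∈ I := Ideal.subset_span (by simp)

/-- The Fermat ideal is saturated. -/
lemma sat (n : ℕ) (u : S) (h0 : X 0 ^ n * u ∈ I) (h1 : X 1 ^ n * u ∈ I) (h2 : X 2 ^ n * u ∈ I) :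
    u ∈ I := by
  have hQ : u ∈ Q := by
    apply nzdQ_pow n
    refine I_le Q ?_ ?_ ?_ h0 <;> unfold Q <;> rw [Ideal.mem_span_pair]
    · exact ⟨X 0, 0, by ring⟩
    · exact ⟨X 1, X 1, by ring⟩
    · exact ⟨0, X 2, by ring⟩
  have k01 : u ∈ Ideal.span {(X 0 : S), X 1} := by
    apply nzd1 0 1 2 (by decide) (by decide) n
    refine I_le _ ?_ ?_ ?_ h2 <;> rw [Ideal.mem_span_pair]
    · exact ⟨X 1 ^ 3 - X 2 ^ 3, 0, by ring⟩
    · exact ⟨0, X 0 ^ 3 - X 2 ^ 3, by ring⟩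
    · exact ⟨X 2 * X 0 ^ 2, - X 2 * X 1 ^ 2, by ring⟩
  have k12 : u ∈ Ideal.span {(X 1 : S), X 2} := by
    apply nzd1 1 2 0 (by decide) (by decide) n
    refine I_le _ ?_ ?_ ?_ h0 <;> rw [Ideal.mem_span_pair]
    · exact ⟨X 0 * X 1 ^ 2, -X 0 * X 2 ^ 2, by ring⟩
    · exact ⟨X 0 ^ 3 - X 2 ^ 3, 0, by ring⟩
    · exact ⟨0, X 0 ^ 3 - X 1 ^ 3, by ring⟩
  have k02 : u ∈ Ideal.span {(X 0 : S), X 2} := by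
    apply nzd1 0 2 1 (by decide) (by decide) n
    refine I_le _ ?_ ?_ ?_ h1 <;> rw [Ideal.mem_span_pair]
    · exact ⟨X 1 ^ 3 - X 2 ^ 3, 0, by ring⟩
    · exact ⟨X 1 * X 0 ^ 2, -X 1 * X 2 ^ 2, by ring⟩
    · exact ⟨0, X 0 ^ 3 - X 1 ^ 3, by ring⟩
  unfold Q at hQ
  rw [Ideal.mem_span_pair] at hQ k01 k12 k02
  obtain ⟨s, t, rfl⟩ := hQ
  obtain ⟨p01, q01, e01⟩ := k01
  obtain ⟨p12, q12, e12⟩ := k12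
  obtain ⟨p02, q02, e02⟩ := k02
  have ks : s ∈ Ideal.span {(X 0 : S), X 1} := by
    apply nzd1 0 1 2 (by decide) (by decide) 3
    rw [Ideal.mem_span_pair]
    exact ⟨t * X 0 ^ 2 - p01, (s - t) * X 1 ^ 2 - q01, by linear_combination -e01⟩
  have kt : t ∈ Ideal.span {(X 1 : S), X 2} := by
    apply nzd1 1 2 0 (by decide) (by decide) 3
    rw [Ideal.mem_span_pair]
    exact ⟨p12 - (s - t) * X 1 ^ 2, q12 + s * X 2 ^ 2, by linear_combination e12⟩
  have kst : s - t ∈ Ideal.span {(X 0 : S), X 2} := by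
    apply nzd1 0 2 1 (by decide) (by decide) 3
    rw [Ideal.mem_span_pair]
    exact ⟨p02 - t * X 0 ^ 2, q02 + s * X 2 ^ 2, by linear_combination e02⟩
  rw [Ideal.mem_span_pair] at ks kt
  obtain ⟨s1, s2, rfl⟩ := ks
  obtain ⟨t1, t2, rfl⟩ := kt
  have kst2 : s2 - t1 ∈ Ideal.span {(X 0 : S), X 2} := by
    apply nzd1 0 2 1 (by decide) (by decide) 1
    rw [Ideal.mem_span_pair] at kst ⊢
    obtain ⟨a, b, e⟩ := kst
    exact ⟨a - s1, b + t2, by linear_combination e⟩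
  rw [Ideal.mem_span_pair] at kst2
  obtain ⟨k, l, e⟩ := kst2
  have : (s1 * X 0 + s2 * X 1) * ((X 1 : S) ^ 3 - X 2 ^ 3) + (t1 * X 1 + t2 * X 2) *
      (X 0 ^ 3 - X 1 ^ 3) = (s1 + k * X 1) * (X 0 * (X 1 ^ 3 - X 2 ^ 3))
      + (t1 + l * X 2) * (X 1 * (X 0 ^ 3 - X 2 ^ 3))
      + (t2 - l * X 1) * (X 2 * (X 0 ^ 3 - X 1 ^ 3)) := by
    linear_combination -(X 1 * (X 1 ^ 3 - X 2 ^ 3)) * e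
  rw [this]
  exact add_mem (add_mem (Ideal.mul_mem_left _ _ g0) (Ideal.mul_mem_left _ _ g1))
    (Ideal.mul_mem_left _ _ g2)

/-! ### Non-containment in the square -/

noncomputable def E (i j k : ℕ) : Fin 3 →₀ ℕ := Finsupp.equivFunOnFinite.symm ![i, j, k]

lemma coeffE (i j k a b c : ℕ) (q : S) :
    coeff (E i j k) (q * (X 0 ^ a * X 1 ^ b * X 2 ^ c)) =
      if a ≤ i ∧ b ≤ j ∧ c ≤ k then coeff (E (i - a) (j - b) (k - c)) q else 0 := by
  have e : (X 0 ^ a * X 1 ^ b * X 2 ^ c : S) = monomial (E a b c) 1 := by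
    rw [monomial_eq]
    simp [E, Finsupp.prod_fintype, Fin.prod_univ_three]
  have h1 : E a b c ≤ E i j k ↔ (a ≤ i ∧ b ≤ j ∧ c ≤ k) := by
    rw [Finsupp.le_def]
    simp [E, Fin.forall_fin_succ]
  have h2 : E i j k - E a b c = E (i - a) (j - b) (k - c) := by
    ext x
    fin_cases x <;> simp [E]
  rw [e, coeff_mul_monomial', h2]
  simp [h1]

noncomputable def lam : S →ₗ[ℂ] ℂ := lcoeff ℂ (E 6 0 3) - lcoeff ℂ (E 0 6 3)

lemma lam_apply (a b c : ℕ) (q : S) : lam (q * (X 0 ^ a * X 1 ^ b * X 2 ^ c)) =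
    (if a ≤ 6 ∧ b ≤ 0 ∧ c ≤ 3 then coeff (E (6 - a) (0 - b) (3 - c)) q else 0) -
    (if a ≤ 0 ∧ b ≤ 6 ∧ c ≤ 3 then coeff (E (0 - a) (6 - b) (3 - c)) q else 0) := by
  simp only [lam, LinearMap.sub_apply, lcoeff_apply, coeffE]

lemma lam_expand (q p : S) (a b c a1 b1 c1 a2 b2 c2 a3 b3 c3 : ℕ)
    (h : p = X 0 ^ a * X 1 ^ b * X 2 ^ c - X 0 ^ a1 * X 1 ^ b1 * X 2 ^ c1
      - X 0 ^ a2 * X 1 ^ b2 * X 2 ^ c2 + X 0 ^ a3 * X 1 ^ b3 * X 2 ^ c3) :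
    lam (q * p) = lam (q * (X 0 ^ a * X 1 ^ b * X 2 ^ c))
      - lam (q * (X 0 ^ a1 * X 1 ^ b1 * X 2 ^ c1)) - lam (q * (X 0 ^ a2 * X 1 ^ b2 * X 2 ^ c2))
      + lam (q * (X 0 ^ a3 * X 1 ^ b3 * X 2 ^ c3)) := by
  rw [h, mul_add, mul_sub, mul_sub, map_add, map_sub, map_sub]

lemma lam_gens (x y : S)
    (hx : x ∈ ({(X 0 : S) * (X 1 ^ 3 - X 2 ^ 3), X 1 * (X 0 ^ 3 - X 2 ^ 3),
      X 2 * (X 0 ^ 3 - X 1 ^ 3)} : Set S))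
    (hy : y ∈ ({(X 0 : S) * (X 1 ^ 3 - X 2 ^ 3), X 1 * (X 0 ^ 3 - X 2 ^ 3),
      X 2 * (X 0 ^ 3 - X 1 ^ 3)} : Set S)) (q : S) : lam (q * (x * y)) = 0 := by
  have h01 : lam (q * ((X 0 * (X 1 ^ 3 - X 2 ^ 3)) * (X 1 * (X 0 ^ 3 - X 2 ^ 3)))) = 0 := by
    rw [lam_expand q _ 4 4 0 1 4 3 4 1 3 1 1 6 (by ring)]
    simp only [lam_apply]
    simp
  have h02 : lam (q * ((X 0 * (X 1 ^ 3 - X 2 ^ 3)) * (X 2 * (X 0 ^ 3 - X 1 ^ 3)))) = 0 := by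
    rw [lam_expand q _ 4 3 1 1 6 1 4 0 4 1 3 4 (by ring)]
    simp only [lam_apply]
    simp
  have h12 : lam (q * ((X 1 * (X 0 ^ 3 - X 2 ^ 3)) * (X 2 * (X 0 ^ 3 - X 1 ^ 3)))) = 0 := by
    rw [lam_expand q _ 6 1 1 3 1 4 3 4 1 0 4 4 (by ring)]
    simp only [lam_apply]
    simp
  rcases hx with rfl | rfl | rfl <;> rcases hy with rfl | rfl | rfl
  · rw [lam_expand q _ 2 6 0 2 3 3 2 3 3 2 0 6 (by ring)]
    simp only [lam_apply]
    simp
  · exact h01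
  · exact h02
  · rw [mul_comm (X 1 * _)]; exact h01
  · rw [lam_expand q _ 6 2 0 3 2 3 3 2 3 0 2 6 (by ring)]
    simp only [lam_apply]
    simp
  · exact h12
  · rw [mul_comm (X 2 * _)]; exact h02
  · rw [mul_comm (X 2 * _)]; exact h12
  · rw [lam_expand q _ 6 0 2 3 3 2 3 3 2 0 6 2 (by ring)]
    simp only [lam_apply]
    simp

lemma lam_sq (w : S) (hw : w ∈ I ^ 2) : lam w = 0 := by
  have key : ∀ q : S, lam (q * w) = 0 := by
    unfold I at hw
    rw [pow_two, Ideal.span_mul_span'] at hw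
    induction hw using Submodule.span_induction with
    | mem x h =>
      obtain ⟨a, ha, b, hb, rfl⟩ := h
      exact lam_gens a b ha hb
    | zero => simp
    | add x y _ _ hx hy => intro q; rw [mul_add, map_add, hx, hy, add_zero]
    | smul a x _ hx => intro q; rw [smul_eq_mul, ← mul_assoc]; exact hx _
  simpa using key 1

/-- the product of the nine lines -/
noncomputable def F : S := (X 0 ^ 3 - X 1 ^ 3) * (X 1 ^ 3 - X 2 ^ 3) * (X 0 ^ 3 - X 2 ^ 3)

lemma E_inj (i j k a b c : ℕ) : E i j k = E a b c ↔ (i = a ∧ j = b ∧ k = c) := by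
  simp [E]

lemma F_not_mem : F ∉ I ^ 2 := by
  intro h
  have h1 := lam_sq F h
  have e : F = 1 * (X 0 ^ 6 * X 1 ^ 3 * X 2 ^ 0) - 1 * (X 0 ^ 6 * X 1 ^ 0 * X 2 ^ 3)
    - 1 * (X 0 ^ 3 * X 1 ^ 6 * X 2 ^ 0) + 1 * (X 0 ^ 3 * X 1 ^ 0 * X 2 ^ 6)
    + 1 * (X 0 ^ 0 * X 1 ^ 6 * X 2 ^ 3) - 1 * (X 0 ^ 0 * X 1 ^ 3 * X 2 ^ 6) := by
    unfold F; ring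
  have e0 : E 0 0 0 = 0 := by ext x; fin_cases x <;> simp [E]
  rw [e] at h1
  simp only [map_add, map_sub, lam_apply] at h1
  simp [e0] at h1

/-! ### The transfer along `φ` -/

noncomputable def phi : S →ₐ[ℂ] S :=
  aeval ![X 0 ^ 2 + X 1 ^ 2, X 1 ^ 2 + X 2 ^ 2, X 0 ^ 2 + X 2 ^ 2]

noncomputable def sig : Fin 3 → S :=
  ![C (1/2) * (X 0 + X 2 - X 1), C (1/2) * (X 0 + X 1 - X 2), C (1/2) * (X 1 + X 2 - X 0)]

lemma half (p : S) : C (1/2 : ℂ) * (2 * p) = p := by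
  have : (2 : S) = C 2 := (map_ofNat C 2).symm
  rw [this, ← mul_assoc, ← C_mul]; norm_num

lemma phi_sig (i : Fin 3) : phi (sig i) = X i ^ 2 := by
  fin_cases i <;> simp only [sig, phi] <;> simp [-one_div]
  · linear_combination half (X 0 ^ 2)
  · linear_combination half (X 1 ^ 2)
  · linear_combination half (X 2 ^ 2)

noncomputable def rho (e : Fin 3 → Fin 2) : S →ₗ[ℂ] S :=
  (basisMonomials (Fin 3) ℂ).constr ℂ
    (fun m => if ∀ i, m i % 2 = (e i : ℕ) then ∏ i, sig i ^ (m i / 2) else 0)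

lemma basis_eq (m : Fin 3 →₀ ℕ) : basisMonomials (Fin 3) ℂ m = monomial m 1 :=
  congrFun (coe_basisMonomials (Fin 3) ℂ) m

lemma rho_monomial (e : Fin 3 → Fin 2) (m : Fin 3 →₀ ℕ) : rho e (monomial m 1) =
    if ∀ i, m i % 2 = (e i : ℕ) then ∏ i, sig i ^ (m i / 2) else 0 := by
  unfold rho
  rw [← basis_eq, Module.Basis.constr_basis]

/-- linear-extension principle -/
lemma lin_ext (f g : S →ₗ[ℂ] S) (h : ∀ m, f (monomial m 1) = g (monomial m 1)) (u : S) :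
    f u = g u := by
  have : f = g := (basisMonomials (Fin 3) ℂ).ext fun m => by
    rw [basis_eq]; exact h m
  rw [this]

lemma rho_sq (e : Fin 3 → Fin 2) (j : Fin 3) (u : S) :
    rho e (X j ^ 2 * u) = sig j * rho e u := by
  have key := lin_ext ((rho e).comp (LinearMap.mulLeft ℂ (X j ^ 2)))
    ((LinearMap.mulLeft ℂ (sig j)).comp (rho e)) (fun m => ?_) u
  · simpa only [LinearMap.comp_apply, LinearMap.mulLeft_apply] using key
  simp only [LinearMap.comp_apply, LinearMap.mulLeft_apply]
  have h1 : (X j ^ 2 * monomial m 1 : S) = monomial (m + Finsupp.single j 2) 1 := by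
    rw [X_pow_eq_monomial, monomial_mul, add_comm]; simp
  rw [h1, rho_monomial, rho_monomial]
  have h2 : (∀ i, (m + Finsupp.single j 2 : Fin 3 →₀ ℕ) i % 2 = (e i : ℕ)) ↔ ∀ i, m i % 2 = (e i : ℕ) := by
    refine forall_congr' fun i => ?_
    by_cases h : j = i
    · subst h; simp
    · simp [Finsupp.single_apply, h]
  simp only [h2]
  split_ifs
  · rw [← Finset.mul_prod_erase _ _ (Finset.mem_univ j),
      ← Finset.mul_prod_erase Finset.univ (fun i => sig i ^ (m i / 2)) (Finset.mem_univ j),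
      ← mul_assoc]
    congr 1
    · simp [pow_succ']
    · refine Finset.prod_congr rfl fun i hi => ?_
      have : j ≠ i := (Finset.ne_of_mem_erase hi).symm
      simp [Finsupp.single_apply, this]
  · simp

lemma sig_add : sig 0 + sig 1 = X 0 ∧ sig 1 + sig 2 = X 1 ∧ sig 0 + sig 2 = X 2 := by
  simp only [sig]
  refine ⟨?_, ?_, ?_⟩ <;> simp [-one_div]
  · linear_combination half (X 0)
  · linear_combination half (X 1)
  · linear_combination half (X 2)

lemma rho_phi (e : Fin 3 → Fin 2) (s u : S) : rho e (phi s * u) = s * rho e u := by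
  induction s using MvPolynomial.induction_on generalizing u with
  | C a =>
    have : phi (C a) = C a := by simp [phi]
    rw [this, ← smul_eq_C_mul, ← smul_eq_C_mul, map_smul]
  | add p q hp hq => rw [map_add, add_mul, map_add, hp, hq, add_mul]
  | mul_X p i hp =>
    rw [map_mul phi, mul_assoc, hp, mul_assoc]
    congr 1
    obtain ⟨a0, a1, a2⟩ := sig_add
    fin_cases i
    · have : phi (X 0) = X 0 ^ 2 + X 1 ^ 2 := by simp [phi]
      simp only [Fin.zero_eta, Fin.mk_one, Fin.reduceFinMk]
      rw [this, add_mul, map_add, rho_sq, rho_sq, ← a0, add_mul]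
    · have : phi (X 1) = X 1 ^ 2 + X 2 ^ 2 := by simp [phi]
      simp only [Fin.zero_eta, Fin.mk_one, Fin.reduceFinMk]
      rw [this, add_mul, map_add, rho_sq, rho_sq, ← a1, add_mul]
    · have : phi (X 2) = X 0 ^ 2 + X 2 ^ 2 := by simp [phi]
      simp only [Fin.zero_eta, Fin.mk_one, Fin.reduceFinMk]
      rw [this, add_mul, map_add, rho_sq, rho_sq, ← a2, add_mul]

lemma decomp (u : S) : ∑ e : Fin 3 → Fin 2, (∏ i, X i ^ (e i : ℕ)) * phi (rho e u) = u := by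
  have := lin_ext (∑ e : Fin 3 → Fin 2, (LinearMap.mulLeft ℂ (∏ i, X i ^ (e i : ℕ) : S)).comp
    (phi.toLinearMap.comp (rho e))) LinearMap.id (fun m => ?_) u
  · simpa using this
  · simp only [LinearMap.sum_apply, LinearMap.comp_apply, LinearMap.mulLeft_apply, LinearMap.id_apply,
      AlgHom.toLinearMap_apply, rho_monomial]
    rw [Finset.sum_eq_single (fun i => (⟨m i % 2, Nat.mod_lt _ (by decide)⟩ : Fin 2))]
    · rw [if_pos (fun i => rfl), map_prod, ← Finset.prod_mul_distrib, monomial_eq,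
        Finsupp.prod_fintype _ _ (by simp)]
      simp only [map_one, one_mul, map_pow, phi_sig, ← pow_mul, ← pow_add, Nat.mod_add_div]
    · intro e _ he
      rw [if_neg, map_zero, mul_zero]
      intro h
      apply he
      funext i
      exact Fin.ext (h i).symm
    · simp

lemma mem_map (K : Ideal S) (w : S) : w ∈ K.map phi ↔ ∀ e, rho e w ∈ K := by
  constructor
  · intro hw e
    have key : ∀ q : S, rho e (q * w) ∈ K := by
      rw [Ideal.map] at hw
      induction hw using Submodule.span_induction with
      | mem x h =>
        obtain ⟨a, ha, rfl⟩ := h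
        intro q
        rw [mul_comm]
        erw [rho_phi]
        exact Ideal.mul_mem_right _ _ ha
      | zero => simp
      | add x y _ _ hx hy => intro q; rw [mul_add, map_add]; exact add_mem (hx q) (hy q)
      | smul a x _ hx => intro q; rw [smul_eq_mul, ← mul_assoc]; exact hx _
    simpa using key 1
  · intro h
    rw [← decomp w]
    exact sum_mem fun e _ => Ideal.mul_mem_left _ _ (Ideal.mem_map_of_mem _ (h e))

lemma phiF_not_mem : phi F ∉ (I.map phi) ^ 2 := by
  intro h
  rw [← Ideal.map_pow, mem_map] at h
  apply F_not_mem
  have h1 := h 0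
  rw [← mul_one (phi F), rho_phi] at h1
  have : rho 0 1 = 1 := by
    have := rho_monomial 0 0
    simpa using this
  simpa [this] using h1

lemma sat_map (n : ℕ) (u : S) (h : ∀ i, phi (X i) ^ n * u ∈ I.map phi) : u ∈ I.map phi := by
  rw [mem_map]
  intro e
  have h' : ∀ i, X i ^ n * rho e u ∈ I := fun i => by
    have := (mem_map _ _).1 (h i) e
    rwa [← map_pow, rho_phi] at this
  exact sat n _ (h' 0) (h' 1) (h' 2)

lemma symb_mem {R : Type*} [CommRing R] (J : Ideal R) (n : ℕ) (w : R)
    (h : ∀ P ∈ associatedPrimes R (R ⧸ J), ∃ s, s ∉ P ∧ w * s ∈ J ^ n) :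
    w ∈ symbolicPower J n := by
  unfold symbolicPower
  simp only [Ideal.mem_iInf]
  intro P hP
  letI : P.IsPrime := hP.1
  obtain ⟨s, hs, hw⟩ := h P hP
  rw [Ideal.mem_comap, IsLocalization.mem_map_algebraMap_iff P.primeCompl]
  exact ⟨(⟨_, hw⟩, ⟨s, hs⟩), by simp⟩

/-- the cube membership away from the irrelevant ideal -/
lemma cube {R : Type*} [CommRing R] (J P : Ideal R) [hP : P.IsPrime] (hJP : J ≤ P) (f g h : R)
    (h0 : f * (g ^ 3 - h ^ 3) ∈ J) (h1 : g * (f ^ 3 - h ^ 3) ∈ J) (h2 : h * (f ^ 3 - g ^ 3) ∈ J)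
    (hne : ¬ (f ∈ P ∧ g ∈ P ∧ h ∈ P)) :
    ∃ s, s ∉ P ∧ (f ^ 3 - g ^ 3) * (g ^ 3 - h ^ 3) * (f ^ 3 - h ^ 3) * s ∈ J ^ 3 := by
  have hsub : ∀ a b : R, a ∈ P → a ^ 3 - b ^ 3 ∈ P → b ∈ P := fun a b ha hab =>
    hP.mem_of_pow_mem 3 ((Submodule.sub_mem_iff_right P (P.pow_mem_of_mem ha 3 (by norm_num))).1 hab)
  have hsub' : ∀ a b : R, a ∈ P → b ^ 3 - a ^ 3 ∈ P → b ∈ P := fun a b ha hab =>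
    hsub a b ha (by rw [← neg_sub]; exact neg_mem hab)
  have m0 := hP.mem_or_mem (hJP h0)
  have m1 := hP.mem_or_mem (hJP h1)
  have m2 := hP.mem_or_mem (hJP h2)
  have c3 : ∀ {a}, a ∈ J → a ^ 3 ∈ J ^ 3 := fun ha => Ideal.pow_mem_pow ha 3
  have pm : ∀ {a b : R} {k : ℕ}, (a ^ k * b ^ k) ∈ P → a ∈ P ∨ b ∈ P := fun hab =>
    (hP.mem_or_mem hab).imp (hP.mem_of_pow_mem _) (hP.mem_of_pow_mem _)
  by_cases hf : f ∈ P <;> by_cases hg : g ∈ P <;> by_cases hh : h ∈ P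
  · exact absurd ⟨hf, hg, hh⟩ hne
  · refine ⟨(f ^ 3 - h ^ 3) ^ 2 * (g ^ 3 - h ^ 3) ^ 2, fun hs => ?_, ?_⟩
    · exact (pm hs).elim (fun k => hh (hsub _ _ hf k)) (fun k => hh (hsub _ _ hg k))
    · have := sub_mem (Ideal.mul_mem_left _ ((f ^ 3 - h ^ 3) ^ 3) (c3 h0))
        (Ideal.mul_mem_left _ ((g ^ 3 - h ^ 3) ^ 3) (c3 h1))
      convert this using 1
      ring
  · refine ⟨(f ^ 3 - g ^ 3) ^ 2 * (g ^ 3 - h ^ 3) ^ 2, fun hs => ?_, ?_⟩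
    · exact (pm hs).elim (fun k => hg (hsub _ _ hf k)) (fun k => hg (hsub' _ _ hh k))
    · have := sub_mem (Ideal.mul_mem_left _ ((f ^ 3 - g ^ 3) ^ 3) (c3 h0))
        (Ideal.mul_mem_left _ ((g ^ 3 - h ^ 3) ^ 3) (c3 h2))
      convert this using 1
      ring
  · exact absurd (hsub _ _ hf (m1.resolve_left hg)) hh
  · refine ⟨(f ^ 3 - g ^ 3) ^ 2 * (f ^ 3 - h ^ 3) ^ 2, fun hs => ?_, ?_⟩
    · exact (pm hs).elim (fun k => hf (hsub' _ _ hg k)) (fun k => hf (hsub' _ _ hh k))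
    · have := sub_mem (Ideal.mul_mem_left _ ((f ^ 3 - g ^ 3) ^ 3) (c3 h1))
        (Ideal.mul_mem_left _ ((f ^ 3 - h ^ 3) ^ 3) (c3 h2))
      convert this using 1
      ring
  · exact absurd (hsub _ _ hg (m0.resolve_left hf)) hh
  · exact absurd (hsub' _ _ hh (m0.resolve_left hf)) hg
  · refine ⟨f * g * h, fun hs => ?_, ?_⟩
    · rcases hP.mem_or_mem hs with k | k
      · exact (hP.mem_or_mem k).elim hf hg
      · exact hh k
    · have := Ideal.mul_mem_mul (Ideal.mul_mem_mul h0 h1) h2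
      rw [← pow_two, ← pow_succ] at this
      convert this using 1
      ring

end Fermat
theorem stmt15 :
    let f : MvPolynomial (Fin 3) ℂ := X 0 ^ 2 + X 1 ^ 2
    let g : MvPolynomial (Fin 3) ℂ := X 1 ^ 2 + X 2 ^ 2
    let h : MvPolynomial (Fin 3) ℂ := X 0 ^ 2 + X 2 ^ 2
    let J : Ideal (MvPolynomial (Fin 3) ℂ) :=
      Ideal.span {f * (g ^ 3 - h ^ 3), g * (f ^ 3 - h ^ 3), h * (f ^ 3 - g ^ 3)}
    ¬ symbolicPower J 3 ≤ J ^ 2 := by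
  intro f g h J hle
  have p0 : Fermat.phi (X 0) = f := by simp [Fermat.phi, f]
  have p1 : Fermat.phi (X 1) = g := by simp [Fermat.phi, g]
  have p2 : Fermat.phi (X 2) = h := by simp [Fermat.phi, h]
  have hJ : J = Fermat.I.map Fermat.phi := by
    unfold Fermat.I
    rw [Ideal.map_span]
    simp only [Set.image_insert_eq, Set.image_singleton, map_mul, map_sub, map_pow, p0, p1, p2]
    rfl
  have hF : Fermat.phi Fermat.F = (f ^ 3 - g ^ 3) * (g ^ 3 - h ^ 3) * (f ^ 3 - h ^ 3) := by
    simp only [Fermat.F, map_mul, map_sub, map_pow, p0, p1, p2]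
  have j0 : f * (g ^ 3 - h ^ 3) ∈ J := Ideal.subset_span (Set.mem_insert _ _)
  have j1 : g * (f ^ 3 - h ^ 3) ∈ J :=
    Ideal.subset_span (Set.mem_insert_of_mem _ (Set.mem_insert _ _))
  have j2 : h * (f ^ 3 - g ^ 3) ∈ J :=
    Ideal.subset_span (Set.mem_insert_of_mem _ (Set.mem_insert_of_mem _ rfl))
  clear_value J
  refine Fermat.phiF_not_mem (hJ ▸ hle (Fermat.symb_mem J 3 _ fun P hP => ?_))
  rw [hF]
  haveI : P.IsPrime := hP.1
  obtain ⟨x, hx⟩ := hP.2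
  obtain ⟨u, rfl⟩ := Ideal.Quotient.mk_surjective x
  have hmem : ∀ r, r ∈ P ↔ ∃ n : ℕ, r ^ n * u ∈ J := by
    intro r
    rw [hx, Ideal.mem_radical_iff]
    refine exists_congr fun n => ?_
    rw [Submodule.mem_colon_singleton, Submodule.mem_bot, ← Ideal.Quotient.eq_zero_iff_mem]
    rfl
  have hJP : J ≤ P := fun r hr => (hmem r).2 ⟨1, by
    rw [pow_one]; exact Ideal.mul_mem_right _ _ hr⟩
  refine Fermat.cube J P hJP f g h j0 j1 j2 ?_
  rintro ⟨hf, hg, hh⟩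
  obtain ⟨a, ha⟩ := (hmem f).1 hf
  obtain ⟨b, hb⟩ := (hmem g).1 hg
  obtain ⟨c, hc⟩ := (hmem h).1 hh
  have up : ∀ (r : MvPolynomial (Fin 3) ℂ) (k l : ℕ), r ^ k * u ∈ J → r ^ (k + l) * u ∈ J := by
    intro r k l hk
    rw [add_comm, pow_add, mul_assoc]
    exact Ideal.mul_mem_left _ _ hk
  have hu : u ∈ J := by
    rw [hJ]
    apply Fermat.sat_map (a + b + c)
    rw [← hJ]
    intro i
    fin_cases i
    · have := up f a (b + c) ha
      rw [← add_assoc, ← p0] at this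
      exact this
    · have := up g b (a + c) hb
      rw [← add_assoc, add_comm b a, ← p1] at this
      exact this
    · have := up h c (a + b) hc
      rw [add_comm c, ← p2] at this
      exact this
  apply Ideal.IsPrime.ne_top (I := P) inferInstance
  rw [Ideal.eq_top_iff_one]
  exact (hmem 1).2 ⟨1, by simpa using hu⟩
end

section
/- Let I = (x(y^3−z^3), y(x^3−z^3), z(x^3−y^3)) ⊆ C[x,y,z] and let ψ: C[x,y,z] → C[x,y,z] be given by x ↦ x^2, y ↦ y^2, z ↦ z^2. Then the (non-radical) ideal ψ_*(I) = (x^2(y^6−z^6), y^2(x^6−z^6), z^2(x^6−y^6)) satisfies ψ_*(I)^{(3)} ⊄ ψ_*(I)^2. -/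
open MvPolynomial

namespace S16

abbrev R := MvPolynomial (Fin 3) ℂ

noncomputable abbrev x : R := X 0
noncomputable abbrev y : R := X 1
noncomputable abbrev z : R := X 2

noncomputable abbrev g1 : R := x ^ 2 * (y ^ 6 - z ^ 6)
noncomputable abbrev g2 : R := y ^ 2 * (x ^ 6 - z ^ 6)
noncomputable abbrev g3 : R := z ^ 2 * (x ^ 6 - y ^ 6)

noncomputable abbrev J : Ideal R := Ideal.span {g1, g2, g3}

noncomputable abbrev F : R := (x ^ 6 - y ^ 6) * (y ^ 6 - z ^ 6) * (z ^ 6 - x ^ 6)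

lemma mem_J {f : R} : f ∈ J ↔ ∃ a b c, f = a * g1 + b * g2 + c * g3 := by
  rw [Ideal.mem_span_insert]
  constructor
  · rintro ⟨a, u, hu, rfl⟩
    obtain ⟨b, c, rfl⟩ := Ideal.mem_span_pair.1 hu
    exact ⟨a, b, c, by ring⟩
  · rintro ⟨a, b, c, rfl⟩
    exact ⟨a, b * g2 + c * g3, Ideal.mem_span_pair.2 ⟨b, c, rfl⟩, by ring⟩

lemma D_dvd (h : R) (hd : y ^ 6 - z ^ 6 ∣ (x ^ 6 - z ^ 6) * h) : y ^ 6 - z ^ 6 ∣ h := by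
  let e := finSuccEquiv ℂ 2
  let c : MvPolynomial (Fin 2) ℂ := X 0 ^ 6 - X 1 ^ 6
  have ex : e x = Polynomial.X := finSuccEquiv_X_zero
  have ey : e y = Polynomial.C (X 0) := finSuccEquiv_X_succ (j := 0)
  have ez : e z = Polynomial.C (X 1) := finSuccEquiv_X_succ (j := 1)
  have eD : e (y ^ 6 - z ^ 6) = Polynomial.C c := by
    simp [ey, ez, c]
  have eE : e (x ^ 6 - z ^ 6) = Polynomial.X ^ 6 - Polynomial.C (X 1 ^ 6) := by
    simp [ex, ez]
  have key : ∀ q : Polynomial (MvPolynomial (Fin 2) ℂ), Polynomial.C c ∣ q ↔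
      q.map (Ideal.Quotient.mk (Ideal.span {c})) = 0 := by
    intro q
    rw [Polynomial.C_dvd_iff_dvd_coeff, Polynomial.ext_iff]
    simp [Ideal.Quotient.eq_zero_iff_mem, Ideal.mem_span_singleton]
  rw [← map_dvd_iff e] at hd ⊢
  rw [map_mul, eD, eE, key, Polynomial.map_mul] at hd
  rw [eD, key]
  have hm : ((Polynomial.X ^ 6 - Polynomial.C (X 1 ^ 6) :
      Polynomial (MvPolynomial (Fin 2) ℂ)).map (Ideal.Quotient.mk (Ideal.span {c}))).Monic :=
    (Polynomial.monic_X_pow_sub_C _ (by norm_num)).map _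
  exact hm.isRegular.left (by simpa using hd)

lemma x_not : ¬ (x ∣ y ^ 6 - z ^ 6) := by
  rintro ⟨t, ht⟩
  have := congrArg (eval (![0, 1, 0] : Fin 3 → ℂ)) ht
  simp at this

lemma y_not : ¬ (y ∣ y ^ 6 - z ^ 6) := by
  rintro ⟨t, ht⟩
  have := congrArg (eval (![0, 0, 1] : Fin 3 → ℂ)) ht
  simp at this

lemma D_ne : (y ^ 6 - z ^ 6 : R) ≠ 0 := fun h => x_not (h ▸ dvd_zero _)

lemma x_ne : (x : R) ≠ 0 := X_ne_zero _
lemma y_ne : (y : R) ≠ 0 := X_ne_zero _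

lemma g1_ne : g1 ≠ 0 := mul_ne_zero (pow_ne_zero _ x_ne) D_ne

lemma syz (a b c : R) (h : a * g1 + b * g2 + c * g3 = 0) :
    ∃ p q, a = p * x ^ 4 + q * (y ^ 2 * z ^ 2) ∧ b = - (p * y ^ 4 + q * (x ^ 2 * z ^ 2)) ∧
      c = p * z ^ 4 + q * (x ^ 2 * y ^ 2) := by
  obtain ⟨p, hp⟩ : y ^ 6 - z ^ 6 ∣ - b * y ^ 2 - c * z ^ 2 := by
    apply D_dvd
    refine ⟨a * x ^ 2 - c * z ^ 2, ?_⟩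
    simp only [g1, g2, g3] at h
    linear_combination -h
  obtain ⟨w, hw⟩ : x ^ 2 ∣ y ^ 4 * c + z ^ 4 * b := by
    have h1 : x ^ 2 ∣ (y ^ 2 * z ^ 2) * (y ^ 4 * c + z ^ 4 * b) := by
      refine ⟨a * (y ^ 6 - z ^ 6) + b * y ^ 2 * x ^ 4 + c * z ^ 2 * x ^ 4, ?_⟩
      simp only [g1, g2, g3] at h
      linear_combination -h
    refine (X_prime (i := (0 : Fin 3)) (R := ℂ)).pow_dvd_of_dvd_mul_left 2 ?_ h1
    rintro ⟨t, ht⟩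
    have := congrArg (eval (![0, 1, 1] : Fin 3 → ℂ)) ht
    simp at this
  have h2 : y ^ 2 * (y ^ 4 * c + z ^ 4 * b) = (y ^ 6 - z ^ 6) * (c - z ^ 4 * p) := by
    linear_combination (-z ^ 4) * hp
  obtain ⟨t, ht⟩ : y ^ 2 ∣ c - z ^ 4 * p :=
    (X_prime (i := (1 : Fin 3)) (R := ℂ)).pow_dvd_of_dvd_mul_left 2 y_not ⟨_, h2.symm⟩
  have h3 : y ^ 4 * c + z ^ 4 * b = (y ^ 6 - z ^ 6) * t := by
    apply mul_left_cancel₀ (pow_ne_zero 2 y_ne)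
    rw [h2, ht]; ring
  obtain ⟨q, rfl⟩ : x ^ 2 ∣ t :=
    (X_prime (i := (0 : Fin 3)) (R := ℂ)).pow_dvd_of_dvd_mul_left 2 x_not ⟨w, h3 ▸ hw⟩
  have hb : b = - (p * y ^ 4 + q * (x ^ 2 * z ^ 2)) := by
    apply mul_left_cancel₀ D_ne
    linear_combination (-y ^ 4) * hp - z ^ 2 * h3
  have hc : c = p * z ^ 4 + q * (x ^ 2 * y ^ 2) := by linear_combination ht
  refine ⟨p, q, ?_, hb, hc⟩
  apply mul_left_cancel₀ g1_ne
  rw [hb, hc] at h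
  simp only [g1, g2, g3] at h ⊢
  linear_combination h

lemma inj (p q : R) (hb : p * y ^ 4 + q * (x ^ 2 * z ^ 2) = 0)
    (hc : p * z ^ 4 + q * (x ^ 2 * y ^ 2) = 0) : p = 0 ∧ q = 0 := by
  constructor
  · apply mul_left_cancel₀ D_ne
    apply mul_left_cancel₀ (pow_ne_zero 2 x_ne)
    linear_combination (x ^ 2 * y ^ 2) * hb - x ^ 2 * z ^ 2 * hc
  · apply mul_left_cancel₀ D_ne
    apply mul_left_cancel₀ (pow_ne_zero 2 x_ne)
    linear_combination y ^ 4 * hc - z ^ 4 * hb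

lemma koszul (u v w : R) (h : z * u - y * v + x * w = 0) : ∃ s t, u = y * t + x * s := by
  have hmem : z * u ∈ Ideal.span ((X : Fin 3 → R) '' {0, 1}) := by
    have : z * u = v * y + (-w) * x := by linear_combination h
    rw [this]
    exact add_mem (Ideal.mul_mem_left _ _ (Ideal.subset_span ⟨1, by simp⟩))
      (Ideal.mul_mem_left _ _ (Ideal.subset_span ⟨0, by simp⟩))
  have hu : u ∈ Ideal.span ((X : Fin 3 → R) '' {0, 1}) := by
    rw [mem_ideal_span_X_image] at hmem ⊢
    intro m hm
    obtain ⟨i, hi, hne⟩ := hmem (Finsupp.single 2 1 + m) (by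
      rw [mem_support_iff] at hm ⊢
      rwa [coeff_X_mul])
    refine ⟨i, hi, ?_⟩
    rcases hi with rfl | rfl <;> simpa using hne
  rw [Set.image_pair] at hu
  obtain ⟨s, t, rfl⟩ := Ideal.mem_span_pair.1 hu
  exact ⟨s, t, by ring⟩

lemma sat (f : R) (hx : x * f ∈ J) (hy : y * f ∈ J) (hz : z * f ∈ J) : f ∈ J := by
  obtain ⟨a1, a2, a3, ha⟩ := mem_J.1 hx
  obtain ⟨b1, b2, b3, hb⟩ := mem_J.1 hy
  obtain ⟨c1, c2, c3, hc⟩ := mem_J.1 hz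
  obtain ⟨p, q, h1, h2, h3⟩ := syz (y * a1 - x * b1) (y * a2 - x * b2) (y * a3 - x * b3)
    (by linear_combination x * hb - y * ha)
  obtain ⟨p', q', h1', h2', h3'⟩ := syz (z * a1 - x * c1) (z * a2 - x * c2) (z * a3 - x * c3)
    (by linear_combination x * hc - z * ha)
  obtain ⟨p'', q'', h1'', h2'', h3''⟩ := syz (z * b1 - y * c1) (z * b2 - y * c2) (z * b3 - y * c3)
    (by linear_combination y * hc - z * hb)
  obtain ⟨hp, hq⟩ := inj (z * p - y * p' + x * p'') (z * q - y * q' + x * q'')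
    (by linear_combination z * h2 - y * h2' + x * h2'')
    (by linear_combination -z * h3 + y * h3' - x * h3'')
  obtain ⟨s, t, rfl⟩ := koszul _ _ _ hp
  obtain ⟨s', t', rfl⟩ := koszul _ _ _ hq
  have hxy : ¬ (x ∣ y) := by
    rintro ⟨t, ht⟩
    have := congrArg (eval (![0, 1, 1] : Fin 3 → ℂ)) ht
    simp at this
  have px : Prime x := X_prime
  obtain ⟨e1, he1⟩ : x ∣ a1 - (t * x ^ 4 + t' * (y ^ 2 * z ^ 2)) :=
    (px.dvd_or_dvd (a := y) ⟨b1 + (s * x ^ 4 + s' * (y ^ 2 * z ^ 2)), by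
      linear_combination h1⟩).resolve_left hxy
  obtain ⟨e2, he2⟩ : x ∣ a2 + (t * y ^ 4 + t' * (x ^ 2 * z ^ 2)) :=
    (px.dvd_or_dvd (a := y) ⟨b2 - (s * y ^ 4 + s' * (x ^ 2 * z ^ 2)), by
      linear_combination h2⟩).resolve_left hxy
  obtain ⟨e3, he3⟩ : x ∣ a3 - (t * z ^ 4 + t' * (x ^ 2 * y ^ 2)) :=
    (px.dvd_or_dvd (a := y) ⟨b3 + (s * z ^ 4 + s' * (x ^ 2 * y ^ 2)), by
      linear_combination h3⟩).resolve_left hxy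
  refine mem_J.2 ⟨e1, e2, e3, ?_⟩
  apply mul_left_cancel₀ x_ne
  simp only [g1, g2, g3] at ha ⊢
  linear_combination ha + g1 * he1 + g2 * he2 + g3 * he3

lemma cube {a b c : R} (ha : a ∈ J) (hb : b ∈ J) (hc : c ∈ J) (r : R) :
    r * (a * b * c) ∈ J ^ 3 := by
  have : J ^ 3 = J * J * J := by ring
  rw [this]
  exact Ideal.mul_mem_left _ _ (Ideal.mul_mem_mul (Ideal.mul_mem_mul ha hb) hc)

lemma m1 : g1 ∈ J := Ideal.subset_span (by simp)
lemma m2 : g2 ∈ J := Ideal.subset_span (by simp)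
lemma m3 : g3 ∈ J := Ideal.subset_span (by simp)

lemma Fx : x ^ 8 * F ∈ J ^ 3 := by
  have : x ^ 8 * F = (-x ^ 2) * (g2 * g2 * g2) + y ^ 2 * (g1 * g2 * g2) + x ^ 2 * (g3 * g3 * g3)
    + z ^ 2 * (g1 * g3 * g3) := by simp only [g1, g2, g3, F]; ring
  rw [this]
  exact add_mem (add_mem (add_mem (cube m2 m2 m2 _) (cube m1 m2 m2 _)) (cube m3 m3 m3 _))
    (cube m1 m3 m3 _)

lemma Fy : y ^ 8 * F ∈ J ^ 3 := by
  have : y ^ 8 * F = y ^ 2 * (g3 * g3 * g3) + (-z ^ 2) * (g2 * g3 * g3) + y ^ 2 * (g1 * g1 * g1)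
    + (-x ^ 2) * (g2 * g1 * g1) := by simp only [g1, g2, g3, F]; ring
  rw [this]
  exact add_mem (add_mem (add_mem (cube m3 m3 m3 _) (cube m2 m3 m3 _)) (cube m1 m1 m1 _))
    (cube m2 m1 m1 _)

lemma Fz : z ^ 8 * F ∈ J ^ 3 := by
  have : z ^ 8 * F = z ^ 2 * (g1 * g1 * g1) + x ^ 2 * (g3 * g1 * g1) + (-z ^ 2) * (g2 * g2 * g2)
    + y ^ 2 * (g3 * g2 * g2) := by simp only [g1, g2, g3, F]; ring
  rw [this]
  exact add_mem (add_mem (add_mem (cube m1 m1 m1 _) (cube m3 m1 m1 _)) (cube m2 m2 m2 _))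
    (cube m3 m2 m2 _)

lemma F_mem : F ∈ symbolicPower J 3 := by
  unfold symbolicPower
  simp only [Ideal.mem_iInf]
  intro P hP
  have hPp : P.IsPrime := hP.1
  obtain ⟨s, hs, hsF⟩ : ∃ s, s ∉ P ∧ s * F ∈ J ^ 3 := by
    by_contra! hcon
    have hx : x ∈ P := by
      by_contra h
      exact hcon (x ^ 8) (fun h' => h (hPp.mem_of_pow_mem _ h')) Fx
    have hy : y ∈ P := by
      by_contra h
      exact hcon (y ^ 8) (fun h' => h (hPp.mem_of_pow_mem _ h')) Fy
    have hz : z ∈ P := by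
      by_contra h
      exact hcon (z ^ 8) (fun h' => h (hPp.mem_of_pow_mem _ h')) Fz
    rw [AssociatedPrimes.mem_iff, isAssociatedPrime_iff] at hP
    obtain ⟨_, q, hq⟩ := hP
    obtain ⟨f, rfl⟩ := Ideal.Quotient.mk_surjective q
    have key : ∀ r : R, r ∈ P ↔ r * f ∈ J := by
      intro r
      rw [hq, Submodule.mem_colon_singleton, Submodule.mem_bot,
        ← Ideal.Quotient.eq_zero_iff_mem, map_mul]
      rfl
    apply hPp.ne_top
    rw [Ideal.eq_top_iff_one, key, one_mul]
    exact sat f ((key _).1 hx) ((key _).1 hy) ((key _).1 hz)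
  rw [Ideal.mem_comap]
  have hu : IsUnit (algebraMap R (Localization.AtPrime P) s) :=
    IsLocalization.map_units (M := P.primeCompl) _ ⟨s, hs⟩
  rw [← Ideal.unit_mul_mem_iff_mem _ hu, ← map_mul]
  exact Ideal.mem_map_of_mem _ hsF

noncomputable def e (i j k : ℕ) : Fin 3 →₀ ℕ :=
  Finsupp.single 0 i + Finsupp.single 1 j + Finsupp.single 2 k

lemma e_inj (i j k p q r : ℕ) : e i j k = e p q r ↔ i = p ∧ j = q ∧ k = r := by
  constructor
  · intro h
    have h0 := DFunLike.congr_fun h 0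
    have h1 := DFunLike.congr_fun h 1
    have h2 := DFunLike.congr_fun h 2
    simp [e] at h0 h1 h2
    exact ⟨h0, h1, h2⟩
  · rintro ⟨rfl, rfl, rfl⟩; rfl

lemma e_surj (u : Fin 3 →₀ ℕ) : u = e (u 0) (u 1) (u 2) := by
  ext i; fin_cases i <;> simp [e]

lemma e_add (i j k p q r : ℕ) : e i j k + e p q r = e (i + p) (j + q) (k + r) := by
  ext l; fin_cases l <;> simp [e]

noncomputable def L : R →ₗ[ℂ] ℂ :=
  lcoeff ℂ (e 6 12 0) + lcoeff ℂ (e 0 6 12) + lcoeff ℂ (e 12 0 6)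
    - lcoeff ℂ (e 12 6 0) - lcoeff ℂ (e 0 12 6) - lcoeff ℂ (e 6 0 12)

lemma L_mon (i j k : ℕ) (a : ℂ) : L (monomial (e i j k) a) =
    (if i = 6 ∧ j = 12 ∧ k = 0 then a else 0) + (if i = 0 ∧ j = 6 ∧ k = 12 then a else 0)
    + (if i = 12 ∧ j = 0 ∧ k = 6 then a else 0) - (if i = 12 ∧ j = 6 ∧ k = 0 then a else 0)
    - (if i = 0 ∧ j = 12 ∧ k = 6 then a else 0) - (if i = 6 ∧ j = 0 ∧ k = 12 then a else 0) := by
  simp [L, coeff_monomial, e_inj]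

lemma mon_eq (i j k : ℕ) : x ^ i * y ^ j * z ^ k = monomial (e i j k) (1 : ℂ) := by
  simp [x, y, z, X_pow_eq_monomial, monomial_mul, e]

lemma mon_eq' (i j k : ℕ) (a : ℂ) : monomial (e i j k) a = C a * (x ^ i * y ^ j * z ^ k) := by
  rw [mon_eq, C_mul_monomial, mul_one]

lemma L_kill (G : R) (h : ∀ i j k a, L (monomial (e i j k) a * G) = 0) (p : R) :
    L (p * G) = 0 := by
  induction p using MvPolynomial.induction_on' with
  | monomial u a => rw [e_surj u]; exact h _ _ _ _
  | add p q hp hq => rw [add_mul, map_add, hp, hq, add_zero]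

lemma k11 (p : R) : L (p * (g1 * g1)) = 0 := by
  have hG : g1 * g1 = monomial (e 4 12 0) (1 : ℂ) + monomial (e 4 6 6) (-2 : ℂ) + monomial (e 4 0 12) (1 : ℂ) := by
    simp only [mon_eq', g1, g1, map_neg, map_one, map_ofNat]; ring
  rw [hG]
  refine L_kill _ (fun i j k a => ?_) p
  simp only [mul_add, monomial_mul, e_add, map_add, L_mon]
  simp
  try ring

lemma k12 (p : R) : L (p * (g1 * g2)) = 0 := by
  have hG : g1 * g2 = monomial (e 8 8 0) (1 : ℂ) + monomial (e 2 8 6) (-1 : ℂ) + monomial (e 8 2 6) (-1 : ℂ) + monomial (e 2 2 12) (1 : ℂ) := by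
    simp only [mon_eq', g1, g2, map_neg, map_one, map_ofNat]; ring
  rw [hG]
  refine L_kill _ (fun i j k a => ?_) p
  simp only [mul_add, monomial_mul, e_add, map_add, L_mon]
  simp
  try ring

lemma k13 (p : R) : L (p * (g1 * g3)) = 0 := by
  have hG : g1 * g3 = monomial (e 8 6 2) (1 : ℂ) + monomial (e 2 12 2) (-1 : ℂ) + monomial (e 8 0 8) (-1 : ℂ) + monomial (e 2 6 8) (1 : ℂ) := by
    simp only [mon_eq', g1, g3, map_neg, map_one, map_ofNat]; ring
  rw [hG]
  refine L_kill _ (fun i j k a => ?_) p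
  simp only [mul_add, monomial_mul, e_add, map_add, L_mon]
  simp
  try ring

lemma k22 (p : R) : L (p * (g2 * g2)) = 0 := by
  have hG : g2 * g2 = monomial (e 12 4 0) (1 : ℂ) + monomial (e 6 4 6) (-2 : ℂ) + monomial (e 0 4 12) (1 : ℂ) := by
    simp only [mon_eq', g2, g2, map_neg, map_one, map_ofNat]; ring
  rw [hG]
  refine L_kill _ (fun i j k a => ?_) p
  simp only [mul_add, monomial_mul, e_add, map_add, L_mon]
  simp
  try ring

lemma k23 (p : R) : L (p * (g2 * g3)) = 0 := by
  have hG : g2 * g3 = monomial (e 12 2 2) (1 : ℂ) + monomial (e 6 8 2) (-1 : ℂ) + monomial (e 6 2 8) (-1 : ℂ) + monomial (e 0 8 8) (1 : ℂ) := by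
    simp only [mon_eq', g2, g3, map_neg, map_one, map_ofNat]; ring
  rw [hG]
  refine L_kill _ (fun i j k a => ?_) p
  simp only [mul_add, monomial_mul, e_add, map_add, L_mon]
  simp
  try ring

lemma k33 (p : R) : L (p * (g3 * g3)) = 0 := by
  have hG : g3 * g3 = monomial (e 12 0 4) (1 : ℂ) + monomial (e 6 6 4) (-2 : ℂ) + monomial (e 0 12 4) (1 : ℂ) := by
    simp only [mon_eq', g3, g3, map_neg, map_one, map_ofNat]; ring
  rw [hG]
  refine L_kill _ (fun i j k a => ?_) p
  simp only [mul_add, monomial_mul, e_add, map_add, L_mon]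
  simp
  try ring

lemma L_F : L F = 6 := by
  have hG : F = monomial (e 12 6 0) (-1 : ℂ) + monomial (e 6 0 12) (-1 : ℂ) + monomial (e 12 0 6) (1 : ℂ) + monomial (e 0 12 6) (-1 : ℂ) + monomial (e 6 12 0) (1 : ℂ) + monomial (e 0 6 12) (1 : ℂ) := by
    simp only [mon_eq', F, map_neg, map_one, map_ofNat]; ring
  rw [hG]
  simp only [map_add, L_mon]
  norm_num

lemma F_not : F ∉ J ^ 2 := by
  intro hF
  have hJ : ∀ f ∈ J ^ 2, L f = 0 := by
    intro f hf
    rw [pow_two] at hf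
    refine Submodule.mul_induction_on hf ?_ ?_
    · intro m hm n hn
      obtain ⟨a, b, c, rfl⟩ := mem_J.1 hm
      obtain ⟨a', b', c', rfl⟩ := mem_J.1 hn
      have : (a * g1 + b * g2 + c * g3) * (a' * g1 + b' * g2 + c' * g3) =
          (a * a') * (g1 * g1) + (a * b' + b * a') * (g1 * g2) + (a * c' + c * a') * (g1 * g3)
          + (b * b') * (g2 * g2) + (b * c' + c * b') * (g2 * g3) + (c * c') * (g3 * g3) := by
        ring
      rw [this]
      simp only [map_add, k11, k12, k13, k22, k23, k33, add_zero]
    · intro u v hu hv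
      rw [map_add, hu, hv, add_zero]
  have := hJ F hF
  rw [L_F] at this
  norm_num at this

end S16

/-- For `ψ : x ↦ x², y ↦ y², z ↦ z²`, the (non-radical) ideal
`ψ_*(I) = (x²(y⁶−z⁶), y²(x⁶−z⁶), z²(x⁶−y⁶)) ⊆ ℂ[x,y,z]` satisfies
`ψ_*(I)^(3) ⊄ ψ_*(I)²`. -/
theorem stmt16 :
    let x : MvPolynomial (Fin 3) ℂ := X 0
    let y : MvPolynomial (Fin 3) ℂ := X 1
    let z : MvPolynomial (Fin 3) ℂ := X 2
    let J : Ideal (MvPolynomial (Fin 3) ℂ) :=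
      Ideal.span {x ^ 2 * (y ^ 6 - z ^ 6), y ^ 2 * (x ^ 6 - z ^ 6), z ^ 2 * (x ^ 6 - y ^ 6)}
    ¬ symbolicPower J 3 ≤ J ^ 2 := by
  intro x y z J
  exact fun h => S16.F_not (h S16.F_mem)
end
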